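/- For every ε > 0 there exists n₀ such that for all n ≥ n₀, every properly edge-coloured graph G on n vertices with δ(G) ≥ n/2 has a rainbow matching of size at least (1−ε)·n/2. -/

import Mathlib

/-!
STATEMENT 14: For every `ε > 0` there exists `n₀` such that for all `n ≥ n₀`, every
properly edge-coloured graph `G` on `n` vertices with `δ(G) ≥ n/2` has a rainbow
matching of size at least `(1−ε)·n/2`.
-/

namespace Paper

variable {V : Type*} {C : Type*}

/-- The edge-colouring `c` is proper on `G`: edges sharing a vertex get distinct colours. -/
def ProperColoring (G : SimpleGraph V) (c : Sym2 V → C) : Prop :=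
  ∀ u v w : V, G.Adj u v → G.Adj u w → v ≠ w → c s(u, v) ≠ c s(u, w)

/-- `G` has a rainbow matching of size `k` under the colouring `c`: `k` pairwise
vertex-disjoint edges with pairwise distinct colours. -/
def HasRainbowMatching (G : SimpleGraph V) (c : Sym2 V → C) (k : ℕ) : Prop :=
  ∃ M : Finset (Sym2 V), M.card = k ∧ (∀ e ∈ M, e ∈ G.edgeSet) ∧
    (∀ e ∈ M, ∀ f ∈ M, e ≠ f → ∀ x : V, x ∈ e → x ∉ f) ∧
    (∀ e ∈ M, ∀ f ∈ M, e ≠ f → c e ≠ c f)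

/-!
Regard each edge together with its colour as a hyperedge on vertices and colours: rainbow matchings
become matchings of a linear 3-uniform hypergraph `E`. Let `f S` be the matching number of the part
of `E` inside a `p`-random set `S`. By Russo's formula and the mean value theorem there is a `p`
bounded away from `0` and `1` at which the mean marginals `w x` of `f` have total at most about the
matching number of `E`. Along a hyperedge `e` the marginals, each conditioned on a trace of `S` on
the rest of `e`, telescope to at least `1`; as the links of `x` are disjoint, Bessel's inequality
shows that the conditioning rarely matters, so `w` covers all but few hyperedges almost fully. The
minimum degree, applied at a lightest vertex whose edges are mostly covered, then forces `w` to have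
total weight close to `n / 2`.
-/

section RandomSubset

open Finset

variable {X : Type*} [DecidableEq X]

/-- The probability that a `p`-random set (containing each element independently with probability
`p`) meets `A` exactly in `B`, for `B ⊆ A`. -/
def traceProb (p : ℝ) (A B : Finset X) : ℝ := ∏ x ∈ A, if x ∈ B then p else 1 - p

lemma traceProb_congr {p : ℝ} {A B B' : Finset X} (h : ∀ x ∈ A, x ∈ B ↔ x ∈ B') :
    traceProb p A B = traceProb p A B' :=
  prod_congr rfl fun x hx => by simp only [h x hx]

lemma sum_traceProb_powerset (p : ℝ) (A : Finset X) : ∑ B ∈ A.powerset, traceProb p A B = 1 := by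
  calc ∑ B ∈ A.powerset, traceProb p A B
      = ∑ B ∈ A.powerset, (∏ _x ∈ B, p) * ∏ _x ∈ A \ B, (1 - p) := by
        refine sum_congr rfl fun B hB => ?_
        rw [traceProb, prod_ite, filter_mem_eq_inter, inter_eq_right.2 (mem_powerset.1 hB),
          filter_notMem_eq_sdiff]
    _ = 1 := by rw [← prod_add]; simp

lemma traceProb_nonneg {p : ℝ} (hp : p ∈ Set.Icc 0 1) (A B : Finset X) : 0 ≤ traceProb p A B :=
  prod_nonneg fun x _ => by split_ifs <;> linarith [hp.1, hp.2]

lemma traceProb_pos {p : ℝ} (hp : p ∈ Set.Ioo 0 1) (A B : Finset X) : 0 < traceProb p A B :=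
  prod_pos fun x _ => by split_ifs <;> linarith [hp.1, hp.2]

lemma pow_card_le_traceProb {p δ : ℝ} (hδ : 0 ≤ δ) (hp : p ∈ Set.Icc δ (1 - δ))
    (A B : Finset X) : δ ^ #A ≤ traceProb p A B := by
  rw [← prod_const]
  exact prod_le_prod (fun _ _ => hδ) fun x _ => by split_ifs <;> linarith [hp.1, hp.2]

/-- The increment of a set function `f` when `x` is added, regardless of whether `x` was there. -/
def marginal (f : Finset X → ℝ) (x : X) (S : Finset X) : ℝ := f (insert x S) - f (S.erase x)

/-- Passing from `S \ e` to `S ∪ e` one element at a time; `B x` consists of the elements of `e`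
added before `x`. -/
lemma exists_sum_marginal_eq_sub (e : Finset X) :
    ∃ B : X → Finset X, (∀ x, B x ⊆ e.erase x) ∧ ∀ (f : Finset X → ℝ) (S : Finset X),
      ∑ x ∈ e, marginal f x (S \ e.erase x ∪ B x) = f (S ∪ e) - f (S \ e) := by
  induction e using Finset.induction_on with
  | empty => exact ⟨fun _ => ∅, by simp⟩
  | insert a e ha ih =>
    obtain ⟨B, hB, hsum⟩ := ih
    refine ⟨Function.update B a e, fun x => ?_, fun f S => ?_⟩
    · rcases eq_or_ne x a with rfl | hx
      · simp [ha]
      · rw [Function.update_of_ne hx]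
        exact (hB x).trans (erase_subset_erase x (subset_insert a e))
    have hlast : marginal f a (S \ (insert a e).erase a ∪ e) =
        f (S ∪ insert a e) - f (S.erase a ∪ e) := by
      rw [marginal, erase_insert ha, sdiff_union_self_eq_union, union_insert, erase_union_distrib,
        erase_eq_of_notMem ha]
    have hearlier : ∑ x ∈ e, marginal f x (S \ (insert a e).erase x ∪ Function.update B a e x) =
        f (S.erase a ∪ e) - f (S \ insert a e) := by
      rw [sdiff_insert, ← erase_sdiff_comm, ← hsum f (S.erase a)]
      refine sum_congr rfl fun x hx => ?_
      have hxa : x ≠ a := ne_of_mem_of_not_mem hx ha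
      rw [Function.update_of_ne hxa, erase_insert_of_ne hxa.symm, sdiff_insert, ← erase_sdiff_comm]
    rw [sum_insert ha, Function.update_self, hlast, hearlier]
    ring

lemma hasDerivAt_traceProb (p : ℝ) (A S : Finset X) :
    HasDerivAt (fun q => traceProb q A S)
      (∑ x ∈ A, (if x ∈ S then 1 else -1) * traceProb p (A.erase x) S) p := by
  have hbit (x : X) : HasDerivAt (fun q => if x ∈ S then q else 1 - q)
      (if x ∈ S then (1 : ℝ) else -1) p := by
    split_ifs
    · exact hasDerivAt_id' p
    · exact (hasDerivAt_id' p).const_sub 1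
  simpa only [traceProb, smul_eq_mul, mul_comm] using
    HasDerivAt.fun_finsetProd (u := A) fun x _ => hbit x

variable [Fintype X]

lemma traceProb_univ_sdiff_union (p : ℝ) {A B : Finset X} (hB : B ⊆ A) (S : Finset X) :
    traceProb p univ (S \ A ∪ B) = traceProb p A B * traceProb p Aᶜ S := by
  rw [traceProb, ← prod_mul_prod_compl A]
  exact congrArg₂ (· * ·) (traceProb_congr (by grind)) (traceProb_congr (by grind [mem_compl]))

/-- The mean of a set function over a `p`-random set, as a linear map. -/
def subsetMean (p : ℝ) : (Finset X → ℝ) →ₗ[ℝ] ℝ :=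
  ∑ S, traceProb p univ S • LinearMap.proj S

lemma subsetMean_apply (p : ℝ) (g : Finset X → ℝ) :
    subsetMean p g = ∑ S, traceProb p univ S * g S := by
  simp [subsetMean, LinearMap.sum_apply]

lemma subsetMean_const (p a : ℝ) : subsetMean p (fun _ : Finset X => a) = a := by
  rw [subsetMean_apply, ← sum_mul, ← powerset_univ, sum_traceProb_powerset, one_mul]

lemma subsetMean_mono {p : ℝ} (hp : p ∈ Set.Icc 0 1) {g h : Finset X → ℝ} (hgh : ∀ S, g S ≤ h S) :
    subsetMean p g ≤ subsetMean p h := by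
  simp only [subsetMean_apply]
  exact sum_le_sum fun S _ => mul_le_mul_of_nonneg_left (hgh S) (traceProb_nonneg hp _ _)

lemma subsetMean_nonneg {p : ℝ} (hp : p ∈ Set.Icc 0 1) {g : Finset X → ℝ} (hg : ∀ S, 0 ≤ g S) :
    0 ≤ subsetMean p g :=
  (subsetMean_const p 0).symm.trans_le (subsetMean_mono hp hg)

lemma subsetMean_mul_sq_le {p : ℝ} (hp : p ∈ Set.Icc 0 1) (g h : Finset X → ℝ) :
    subsetMean p (g * h) ^ 2 ≤ subsetMean p (g ^ 2) * subsetMean p (h ^ 2) := by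
  have hw (S : Finset X) := traceProb_nonneg hp univ S
  simp only [subsetMean_apply, Pi.mul_apply, Pi.pow_apply]
  refine sum_sq_le_sum_mul_sum_of_sq_le_mul _ (fun S _ => mul_nonneg (hw S) (sq_nonneg _))
    (fun S _ => mul_nonneg (hw S) (sq_nonneg _)) fun S _ => le_of_eq (by ring)

/-- The involution exchanging the traces on `A` of two sets turns a sum weighted by a function of
the trace into a mixture of means conditioned on the trace. -/
lemma sum_mul_traceProb_compl_mul (p : ℝ) (A : Finset X) (φ g : Finset X → ℝ) :
    ∑ S, φ (S ∩ A) * traceProb p Aᶜ S * g S =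
      ∑ B ∈ A.powerset, φ B * subsetMean p fun S => g (S \ A ∪ B) := by
  calc ∑ S, φ (S ∩ A) * traceProb p Aᶜ S * g S
      = ∑ T ∈ A.powerset ×ˢ univ,
          traceProb p A T.1 * (φ (T.2 ∩ A) * traceProb p Aᶜ T.2 * g T.2) := by
        simp_rw [sum_product, ← mul_sum, ← sum_mul, sum_traceProb_powerset, one_mul]
    _ = ∑ T ∈ A.powerset ×ˢ univ,
          φ T.1 * (traceProb p univ T.2 * g (T.2 \ A ∪ T.1)) := by
        refine sum_nbij' (fun T => (T.2 ∩ A, T.2 \ A ∪ T.1)) (fun T => (T.2 ∩ A, T.2 \ A ∪ T.1))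
          (by simp) (by simp) ?_ ?_ ?_
        all_goals
          rintro ⟨B, S⟩ hT
          have hB : B ⊆ A := mem_powerset.1 (mem_product.1 hT).1
          have hrestore : (S \ A ∪ B) \ A ∪ S ∩ A = S := by grind
        · exact Prod.ext (by grind) hrestore
        · exact Prod.ext (by grind) hrestore
        · simp only [traceProb_univ_sdiff_union p hB, hrestore]
          ring
    _ = ∑ B ∈ A.powerset, φ B * subsetMean p fun S => g (S \ A ∪ B) := by
        simp_rw [sum_product, subsetMean_apply, mul_sum]

/-- The Margulis–Russo formula. -/
lemma hasDerivAt_subsetMean (f : Finset X → ℝ) (p : ℝ) :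
    HasDerivAt (fun q => subsetMean q f) (∑ x, subsetMean p (marginal f x)) p := by
  have hmarginal (x : X) : subsetMean p (marginal f x) =
      ∑ S, (if x ∈ S then 1 else -1) * traceProb p (univ.erase x) S * f S := by
    have hsplit : subsetMean p (marginal f x) =
        subsetMean p (fun S => f (insert x S)) - subsetMean p (fun S => f (S.erase x)) :=
      map_sub _ _ _
    have hmixture :=
      sum_mul_traceProb_compl_mul p {x} (fun B => if x ∈ B then 1 else -1) f
    have hpowerset : ({x} : Finset X).powerset = {{x}, ∅} := by
      ext B
      simp [subset_singleton_iff, or_comm]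
    have hinsert (S : Finset X) : S.erase x ∪ {x} = insert x S := by grind
    rw [hpowerset, sum_pair (singleton_ne_empty x)] at hmixture
    simp only [mem_inter, mem_singleton, and_true, notMem_empty, if_true, if_false, hinsert,
      union_empty, sdiff_singleton_eq_erase, compl_singleton] at hmixture
    rw [hsplit, hmixture]
    ring
  simp only [hmarginal, subsetMean_apply _ f]
  rw [sum_comm]
  simp only [← sum_mul]
  exact HasDerivAt.fun_sum fun S _ => (hasDerivAt_traceProb p univ S).mul_const (f S)

lemma exists_sum_subsetMean_marginal_le {f : Finset X → ℝ} {m δ : ℝ} (hf : ∀ S, f S ∈ Set.Icc 0 m)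
    (hδ : δ ∈ Set.Ioo 0 (1 / 2)) :
    ∃ p ∈ Set.Ioo δ (1 - δ), (1 - 2 * δ) * ∑ x, subsetMean p (marginal f x) ≤ m := by
  obtain ⟨hδ0, hδ2⟩ := hδ
  obtain ⟨p, hp, hslope⟩ := exists_hasDerivAt_eq_slope (fun q => subsetMean q f)
    (fun q => ∑ x, subsetMean q (marginal f x)) (a := δ) (b := 1 - δ) (by linarith)
    (fun q _ => (hasDerivAt_subsetMean f q).continuousAt.continuousWithinAt)
    (fun q _ => hasDerivAt_subsetMean f q)
  refine ⟨p, hp, ?_⟩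
  have hupper : subsetMean (1 - δ) f ≤ m :=
    (subsetMean_mono ⟨by linarith, by linarith⟩ fun S => (hf S).2).trans_eq (subsetMean_const _ _)
  have hlower : 0 ≤ subsetMean δ f :=
    subsetMean_nonneg ⟨hδ0.le, by linarith⟩ fun S => (hf S).1
  rw [hslope, show 1 - δ - δ = 1 - 2 * δ by ring, mul_div_cancel₀ _ (by linarith)]
  linarith

/-- The density, of mean one, of the event that a `p`-random set meets `A` exactly in `B`. -/
noncomputable def traceDensity (p : ℝ) (A B S : Finset X) : ℝ :=
  if S ∩ A = B then (traceProb p A B)⁻¹ else 0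

lemma subsetMean_traceDensity_mul {p : ℝ} (hp : p ∈ Set.Ioo 0 1) {A B : Finset X} (hB : B ⊆ A)
    (g : Finset X → ℝ) :
    subsetMean p (traceDensity p A B * g) = subsetMean p fun S => g (S \ A ∪ B) := by
  calc subsetMean p (traceDensity p A B * g)
      = ∑ S, (if S ∩ A = B then 1 else 0) * traceProb p Aᶜ S * g S := by
        rw [subsetMean_apply]
        refine sum_congr rfl fun S _ => ?_
        rw [Pi.mul_apply, traceDensity]
        split_ifs with h
        · have hA : traceProb p A S = traceProb p A B := traceProb_congr (by grind)
          have huniv : traceProb p univ S = traceProb p A S * traceProb p Aᶜ S :=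
            (prod_mul_prod_compl _ _).symm
          rw [huniv, hA]
          field_simp [(traceProb_pos hp A B).ne']
        · ring
    _ = subsetMean p fun S => g (S \ A ∪ B) := by
        rw [sum_mul_traceProb_compl_mul p A (fun T => if T = B then 1 else 0)]
        simp [hB]

lemma subsetMean_traceDensity {p : ℝ} (hp : p ∈ Set.Ioo 0 1) {A B : Finset X} (hB : B ⊆ A) :
    subsetMean p (traceDensity p A B) = 1 := by
  rw [← mul_one (traceDensity p A B), subsetMean_traceDensity_mul hp hB]
  exact subsetMean_const p 1

lemma subsetMean_traceDensity_mul_self {p : ℝ} (hp : p ∈ Set.Ioo 0 1) {A B : Finset X}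
    (hB : B ⊆ A) :
    subsetMean p (traceDensity p A B * traceDensity p A B) = (traceProb p A B)⁻¹ := by
  have htrace (S : Finset X) : (S \ A ∪ B) ∩ A = B := by grind
  simp only [subsetMean_traceDensity_mul hp hB, traceDensity, htrace, if_true, subsetMean_const]

lemma subsetMean_traceDensity_mul_of_disjoint {p : ℝ} (hp : p ∈ Set.Ioo 0 1)
    {A B A' B' : Finset X} (hB : B ⊆ A) (hB' : B' ⊆ A') (hA : Disjoint A A') :
    subsetMean p (traceDensity p A B * traceDensity p A' B') = 1 := by
  have htrace (S : Finset X) : (S \ A ∪ B) ∩ A' = S ∩ A' := by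
    have := disjoint_left.1 hA
    grind
  simp only [subsetMean_traceDensity_mul hp hB, traceDensity, htrace]
  exact subsetMean_traceDensity hp hB'

/-- Traces on disjoint sets are independent, so their centred densities are orthogonal and Bessel's
inequality bounds the total effect of conditioning `h` on each of them. -/
lemma sum_subsetMean_conditioned_sub_sq_le {ι : Type*} {p : ℝ} (hp : p ∈ Set.Ioo 0 1)
    {I : Finset ι} {A B : ι → Finset X} (hA : (I : Set ι).PairwiseDisjoint A)
    (hB : ∀ i, B i ⊆ A i) (h : Finset X → ℝ) :
    (∑ i ∈ I, (subsetMean p (fun S => h (S \ A i ∪ B i)) - subsetMean p h)) ^ 2 ≤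
      (∑ i ∈ I, (traceProb p (A i) (B i))⁻¹) * subsetMean p (h ^ 2) := by
  set T : ι → Finset X → ℝ := fun i => traceDensity p (A i) (B i)
  have hcov (i : ι) (hi : i ∈ I) :
      ∑ j ∈ I, subsetMean p ((T i - 1) * (T j - 1)) ≤ (traceProb p (A i) (B i))⁻¹ := by
    have hexpand (j : ι) :
        subsetMean p ((T i - 1) * (T j - 1)) = subsetMean p (T i * T j) - 1 := by
      rw [show (T i - 1) * (T j - 1) = T i * T j - T i - T j + 1 by ring, map_add, map_sub,
        map_sub, subsetMean_traceDensity hp (hB i), subsetMean_traceDensity hp (hB j),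
        show subsetMean p (1 : Finset X → ℝ) = 1 from subsetMean_const p 1]
      ring
    rw [sum_eq_single_of_mem i hi fun j hj hji => ?_]
    · rw [hexpand, subsetMean_traceDensity_mul_self hp (hB i)]
      linarith
    · rw [hexpand, subsetMean_traceDensity_mul_of_disjoint hp (hB i) (hB j) (hA hi hj hji.symm),
        sub_self]
  have hvar : subsetMean p ((∑ i ∈ I, (T i - 1)) ^ 2) ≤ ∑ i ∈ I, (traceProb p (A i) (B i))⁻¹ := by
    rw [sq, sum_mul_sum, map_sum]
    simp only [map_sum]
    exact sum_le_sum hcov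
  have hsum : ∑ i ∈ I, (subsetMean p (fun S => h (S \ A i ∪ B i)) - subsetMean p h) =
      subsetMean p ((∑ i ∈ I, (T i - 1)) * h) := by
    simp only [sum_mul, map_sum, sub_mul, map_sub, one_mul, T,
      subsetMean_traceDensity_mul hp (hB _)]
  rw [hsum]
  have hpIcc := Set.Ioo_subset_Icc_self hp
  exact (subsetMean_mul_sq_le hpIcc _ _).trans (mul_le_mul_of_nonneg_right hvar
    (subsetMean_nonneg hpIcc fun S => sq_nonneg (h S)))

end RandomSubset

section MatchingNumber

open Finset

variable {X : Type*}

open scoped Classical in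
/-- The largest number of pairwise disjoint members of the hypergraph `E`. -/
noncomputable def matchingNumber (E : Finset (Finset X)) : ℕ :=
  (E.powerset.filter fun M : Finset (Finset X) => (M : Set (Finset X)).PairwiseDisjoint id).sup card

lemma card_le_matchingNumber {E M : Finset (Finset X)} (hM : M ⊆ E)
    (hdisj : (M : Set (Finset X)).PairwiseDisjoint id) : #M ≤ matchingNumber E := by
  classical exact le_sup (mem_filter.2 ⟨mem_powerset.2 hM, hdisj⟩)

lemma exists_card_eq_matchingNumber (E : Finset (Finset X)) :
    ∃ M ⊆ E, (M : Set (Finset X)).PairwiseDisjoint id ∧ #M = matchingNumber E := by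
  classical
  obtain ⟨M, hM, hcard⟩ := exists_mem_eq_sup
    (E.powerset.filter fun M : Finset (Finset X) => (M : Set (Finset X)).PairwiseDisjoint id)
    ⟨∅, by simp⟩ card
  rw [mem_filter, mem_powerset] at hM
  exact ⟨M, hM.1, hM.2, hcard.symm⟩

lemma matchingNumber_mono {E F : Finset (Finset X)} (h : E ⊆ F) :
    matchingNumber E ≤ matchingNumber F := by
  obtain ⟨M, hM, hdisj, hcard⟩ := exists_card_eq_matchingNumber E
  exact hcard ▸ card_le_matchingNumber (hM.trans h) hdisj

lemma matchingNumber_add_one_le_of_disjoint {E F : Finset (Finset X)} {e : Finset X} (hEF : E ⊆ F)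
    (heF : e ∈ F) (he : e.Nonempty) (hdisj : ∀ f ∈ E, Disjoint e f) :
    matchingNumber E + 1 ≤ matchingNumber F := by
  classical
  obtain ⟨M, hM, hMdisj, hcard⟩ := exists_card_eq_matchingNumber E
  have heM : e ∉ M := fun h => he.ne_empty (disjoint_self.1 (hdisj e (hM h)))
  rw [← hcard, ← card_insert_of_notMem heM]
  refine card_le_matchingNumber (insert_subset heF (hM.trans hEF)) ?_
  rw [coe_insert]
  exact hMdisj.insert fun f hf _ => hdisj f (hM hf)

variable [DecidableEq X]

lemma matchingNumber_le_matchingNumber_filter_notMem_add_one (E : Finset (Finset X)) (x : X) :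
    matchingNumber E ≤ matchingNumber {e ∈ E | x ∉ e} + 1 := by
  obtain ⟨M, hM, hdisj, hcard⟩ := exists_card_eq_matchingNumber E
  have hthrough : #{e ∈ M | x ∈ e} ≤ 1 := card_le_one.2 fun e he f hf => by
    rw [mem_filter] at he hf
    exact hdisj.elim_finset he.1 hf.1 x he.2 hf.2
  have havoid : #{e ∈ M | x ∉ e} ≤ matchingNumber {e ∈ E | x ∉ e} :=
    card_le_matchingNumber (filter_subset_filter _ hM)
      (hdisj.subset (coe_subset.2 (filter_subset _ M)))
  rw [← hcard, ← card_filter_add_card_filter_not (s := M) (x ∈ ·)]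
  lia

/-- The matching number of the subhypergraph of `E` induced by a vertex set, as a real number. -/
noncomputable def inducedMatchingNumber (E : Finset (Finset X)) (S : Finset X) : ℝ :=
  matchingNumber {e ∈ E | e ⊆ S}

lemma inducedMatchingNumber_mem_Icc (E : Finset (Finset X)) (S : Finset X) :
    inducedMatchingNumber E S ∈ Set.Icc 0 (matchingNumber E : ℝ) :=
  ⟨Nat.cast_nonneg _, Nat.cast_le.2 (matchingNumber_mono (filter_subset _ E))⟩

lemma marginal_inducedMatchingNumber_mem_Icc (E : Finset (Finset X)) (x : X) (S : Finset X) :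
    marginal (inducedMatchingNumber E) x S ∈ Set.Icc 0 1 := by
  have hmono : inducedMatchingNumber E (S.erase x) ≤ inducedMatchingNumber E (insert x S) :=
    Nat.cast_le.2 (matchingNumber_mono (monotone_filter_right E fun e _ h =>
      h.trans ((erase_subset x S).trans (subset_insert x S))))
  have hdelete :
      inducedMatchingNumber E (insert x S) ≤ inducedMatchingNumber E (S.erase x) + 1 := by
    have hsub : ({e ∈ {e ∈ E | e ⊆ insert x S} | x ∉ e} : Finset (Finset X)) =
        {e ∈ E | e ⊆ S.erase x} := by grind
    have := matchingNumber_le_matchingNumber_filter_notMem_add_one {e ∈ E | e ⊆ insert x S} x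
    rw [hsub] at this
    simp only [inducedMatchingNumber]
    exact_mod_cast this
  rw [marginal]
  constructor <;> linarith

lemma one_le_inducedMatchingNumber_union_sub_sdiff {E : Finset (Finset X)} {e : Finset X}
    (he : e ∈ E) (hne : e.Nonempty) (S : Finset X) :
    1 ≤ inducedMatchingNumber E (S ∪ e) - inducedMatchingNumber E (S \ e) := by
  have h : matchingNumber {f ∈ E | f ⊆ S \ e} + 1 ≤ matchingNumber {f ∈ E | f ⊆ S ∪ e} :=
    matchingNumber_add_one_le_of_disjoint
      (monotone_filter_right E fun f _ h => h.trans (sdiff_subset.trans subset_union_left))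
      (mem_filter.2 ⟨he, subset_union_right⟩) hne
      fun f hf => disjoint_sdiff.mono_right (mem_filter.1 hf).2
  have : (matchingNumber {f ∈ E | f ⊆ S \ e} : ℝ) + 1 ≤ matchingNumber {f ∈ E | f ⊆ S ∪ e} := by
    exact_mod_cast h
  rw [inducedMatchingNumber, inducedMatchingNumber]
  linarith

end MatchingNumber

section AlmostCover

open Finset

variable {X : Type*} [DecidableEq X]

/-- The hypergraph `E` is linear: distinct edges share at most one vertex. -/
def IsLinear (E : Finset (Finset X)) : Prop :=
  (E : Set (Finset X)).Pairwise fun e f => #(e ∩ f) ≤ 1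

lemma IsLinear.subset {E F : Finset (Finset X)} (hF : IsLinear F) (h : E ⊆ F) : IsLinear E :=
  Set.Pairwise.mono (coe_subset.2 h) hF

lemma IsLinear.pairwiseDisjoint_erase {E : Finset (Finset X)} (hE : IsLinear E) (x : X) :
    (({e ∈ E | x ∈ e} : Finset (Finset X)) : Set (Finset X)).PairwiseDisjoint (·.erase x) := by
  intro e he f hf hef
  rw [mem_coe, mem_filter] at he hf
  refine disjoint_left.2 fun y hye hyf => ne_of_mem_erase hye ?_
  exact card_le_one.1 (hE he.1 hf.1 hef) y
    (mem_inter.2 ⟨mem_of_mem_erase hye, mem_of_mem_erase hyf⟩) x (mem_inter.2 ⟨he.2, hf.2⟩)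

variable [Fintype X]

lemma sum_card_filter_mem_eq_mul_card {E : Finset (Finset X)} {k : ℕ} (hcard : ∀ e ∈ E, #e = k) :
    ∑ x, #{e ∈ E | x ∈ e} = k * #E := by
  have hcount := sum_card_bipartiteAbove_eq_sum_card_bipartiteBelow (s := univ) (t := E)
    fun (x : X) (e : Finset X) => x ∈ e
  simpa only [bipartiteAbove, bipartiteBelow, filter_univ_mem, sum_congr rfl hcard, sum_const,
    smul_eq_mul, mul_comm] using hcount

/-- The links `e.erase x` of a vertex `x` of a linear hypergraph are disjoint, so conditioning on
the trace on one of them has little effect for most edges `e`. -/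
lemma sum_subsetMean_conditioned_sub_le {E : Finset (Finset X)} {r : ℕ} {p δ : ℝ}
    (hlin : IsLinear E) (hcard : ∀ e ∈ E, #e = r + 1) (hδ : 0 < δ)
    (hp : p ∈ Set.Icc δ (1 - δ)) {h : X → Finset X → ℝ} (hh : ∀ x S, h x S ∈ Set.Icc 0 1)
    {B : Finset X → X → Finset X} (hB : ∀ e x, B e x ⊆ e.erase x) :
    ∑ e ∈ E, ∑ x ∈ e, (subsetMean p (fun S => h x (S \ e.erase x ∪ B e x)) - subsetMean p (h x)) ≤
      √((r + 1) * #E * (∑ x, subsetMean p (h x)) / δ ^ r) := by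
  have hpIoo : p ∈ Set.Ioo 0 1 := ⟨hδ.trans_le hp.1, by linarith [hp.2]⟩
  have hpIcc := Set.Ioo_subset_Icc_self hpIoo
  have hmean (x : X) : 0 ≤ subsetMean p (h x) :=
    subsetMean_nonneg hpIcc fun S => (hh x S).1
  have hsq (x : X) : subsetMean p (h x ^ 2) ≤ subsetMean p (h x) :=
    subsetMean_mono hpIcc fun S => pow_le_of_le_one (hh x S).1 (hh x S).2 two_ne_zero
  have hinv (x : X) : ∑ e ∈ E with x ∈ e, (traceProb p (e.erase x) (B e x))⁻¹ ≤
      #{e ∈ E | x ∈ e} / δ ^ r := by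
    rw [div_eq_mul_inv, ← nsmul_eq_mul]
    refine sum_le_card_nsmul _ _ _ fun e he => ?_
    rw [mem_filter] at he
    have hlink : #(e.erase x) = r := by
      rw [card_erase_of_mem he.2, hcard e he.1, Nat.add_sub_cancel]
    exact inv_anti₀ (pow_pos hδ r) (hlink ▸ pow_card_le_traceProb hδ.le hp _ _)
  have hvertex (x : X) :
      ∑ e ∈ E with x ∈ e,
        (subsetMean p (fun S => h x (S \ e.erase x ∪ B e x)) - subsetMean p (h x)) ≤
      √(#{e ∈ E | x ∈ e} / δ ^ r) * √(subsetMean p (h x)) := by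
    rw [← Real.sqrt_mul (by positivity)]
    refine Real.le_sqrt_of_sq_le <| (sum_subsetMean_conditioned_sub_sq_le hpIoo
      (hlin.pairwiseDisjoint_erase x) (fun e => hB e x) (h x)).trans ?_
    exact mul_le_mul (hinv x) (hsq x)
      (subsetMean_nonneg hpIcc fun S => sq_nonneg (h x S)) (by positivity)
  have hdegree : ∑ x, (#{e ∈ E | x ∈ e} : ℝ) = (r + 1) * #E := by
    exact_mod_cast sum_card_filter_mem_eq_mul_card hcard
  calc ∑ e ∈ E, ∑ x ∈ e,
        (subsetMean p (fun S => h x (S \ e.erase x ∪ B e x)) - subsetMean p (h x))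
      = ∑ x, ∑ e ∈ E with x ∈ e,
        (subsetMean p (fun S => h x (S \ e.erase x ∪ B e x)) - subsetMean p (h x)) :=
        sum_comm' (by simp)
    _ ≤ ∑ x, √(#{e ∈ E | x ∈ e} / δ ^ r) * √(subsetMean p (h x)) :=
        sum_le_sum fun x _ => hvertex x
    _ ≤ √(∑ x, #{e ∈ E | x ∈ e} / δ ^ r) * √(∑ x, subsetMean p (h x)) :=
        Real.sum_sqrt_mul_sqrt_le _ (fun x => by positivity) hmean
    _ = √((r + 1) * #E * (∑ x, subsetMean p (h x)) / δ ^ r) := by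
        rw [← sum_div, hdegree, ← Real.sqrt_mul (by positivity), div_mul_eq_mul_div]

theorem exists_almost_fractional_cover {E : Finset (Finset X)} {r : ℕ} {δ : ℝ}
    (hlin : IsLinear E) (hcard : ∀ e ∈ E, #e = r + 1) (hδ : δ ∈ Set.Ioo 0 (1 / 2)) :
    ∃ w : X → ℝ, (∀ x, 0 ≤ w x) ∧ (1 - 2 * δ) * ∑ x, w x ≤ matchingNumber E ∧
      ∑ e ∈ E, max 0 (1 - ∑ x ∈ e, w x) ≤ √((r + 1) * #E * (∑ x, w x) / δ ^ r) := by
  obtain ⟨p, hp, hweight⟩ :=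
    exists_sum_subsetMean_marginal_le (inducedMatchingNumber_mem_Icc E) hδ
  have hpIcc : p ∈ Set.Icc 0 1 := ⟨(hδ.1.trans hp.1).le, by linarith [hp.2, hδ.1]⟩
  set h : X → Finset X → ℝ := marginal (inducedMatchingNumber E)
  set w : X → ℝ := fun x => subsetMean p (h x)
  have hw (x : X) : 0 ≤ w x :=
    subsetMean_nonneg hpIcc fun S => (marginal_inducedMatchingNumber_mem_Icc E x S).1
  choose B hB htelescope using fun e : Finset X => exists_sum_marginal_eq_sub e
  have hedge (e : Finset X) (he : e ∈ E) : 1 - ∑ x ∈ e, w x ≤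
      ∑ x ∈ e, (subsetMean p (fun S => h x (S \ e.erase x ∪ B e x)) - w x) := by
    have hgain : 1 ≤ subsetMean p (∑ x ∈ e, fun S => h x (S \ e.erase x ∪ B e x)) := by
      refine (subsetMean_const p 1).symm.trans_le (subsetMean_mono hpIcc fun S => ?_)
      rw [Finset.sum_apply, htelescope]
      exact one_le_inducedMatchingNumber_union_sub_sdiff he (card_pos.1 (by simp [hcard e he])) S
    rw [map_sum] at hgain
    rw [sum_sub_distrib]
    exact sub_le_sub_right hgain _
  refine ⟨w, hw, hweight, ?_⟩
  calc ∑ e ∈ E, max 0 (1 - ∑ x ∈ e, w x)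
      = ∑ e ∈ E with 0 ≤ 1 - ∑ x ∈ e, w x, (1 - ∑ x ∈ e, w x) := by
        rw [sum_filter]
        refine sum_congr rfl fun e _ => ?_
        split_ifs with hsign
        · exact max_eq_right hsign
        · exact max_eq_left (le_of_not_ge hsign)
    _ ≤ ∑ e ∈ E with 0 ≤ 1 - ∑ x ∈ e, w x,
          ∑ x ∈ e, (subsetMean p (fun S => h x (S \ e.erase x ∪ B e x)) - w x) :=
        sum_le_sum fun e he => hedge e (mem_of_mem_filter e he)
    _ ≤ √((r + 1) * #{e ∈ E | 0 ≤ 1 - ∑ x ∈ e, w x} * (∑ x, w x) / δ ^ r) :=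
        sum_subsetMean_conditioned_sub_le (hlin.subset (filter_subset _ E))
          (fun e he => hcard e (mem_of_mem_filter e he)) hδ.1
          (Set.Ioo_subset_Icc_self hp) (marginal_inducedMatchingNumber_mem_Icc E) hB
    _ ≤ √((r + 1) * #E * (∑ x, w x) / δ ^ r) := by
        have := hδ.1
        have := sum_nonneg fun x (_ : x ∈ univ) => hw x
        gcongr
        exact filter_subset _ E

end AlmostCover

section VertexColourCover

open Finset

variable {W : Type*}

lemma card_sub_card_mul_le_sum {y : W → ℝ} {B N : Finset W} {t : ℝ} (hy : ∀ v, 0 ≤ y v) (ht : 0 ≤ t)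
    (hmin : ∀ v ∉ B, t ≤ y v) :
    ((#N : ℝ) - #B) * t ≤ ∑ v ∈ N, y v := by
  classical
  calc ((#N : ℝ) - #B) * t ≤ #(N \ B) * t := by
        refine mul_le_mul_of_nonneg_right ?_ ht
        have := le_card_sdiff B N
        rw [sub_le_iff_le_add]
        exact_mod_cast (by lia : #N ≤ #(N \ B) + #B)
    _ ≤ ∑ v ∈ N \ B, y v := by
        rw [← nsmul_eq_mul]
        exact card_nsmul_le_sum _ _ _ fun v hv => hmin v (mem_sdiff.1 hv).2
    _ ≤ ∑ v ∈ N, y v := sum_le_sum_of_subset_of_nonneg sdiff_subset fun v _ _ => hy v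

variable [Fintype W]

lemma card_filter_lt_mul_le_sum {a : W → ℝ} (ha : ∀ v, 0 ≤ a v) (t : ℝ) :
    #{v | t < a v} * t ≤ ∑ v, a v := by
  rw [← nsmul_eq_mul]
  exact (card_nsmul_le_sum _ _ _ fun v hv => (mem_filter.1 hv).2.le).trans
    (sum_le_univ_sum_of_nonneg ha)

variable (G : SimpleGraph W) [DecidableRel G.Adj]

lemma sum_sum_neighborFinset_eq_two_mul_sum_edgeFinset (r : Sym2 W → ℝ) :
    ∑ v, ∑ u ∈ G.neighborFinset v, r s(v, u) = 2 * ∑ e ∈ G.edgeFinset, r e := by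
  classical
  have hvertex (v : W) : ∑ u ∈ G.neighborFinset v, r s(v, u) = ∑ e ∈ G.incidenceFinset v, r e := by
    refine sum_bij (fun u _ => s(v, u)) (fun u hu => ?_) (fun u _ u' _ h => Sym2.congr_right.1 h)
      (fun e he => ?_) fun u _ => rfl
    · rw [SimpleGraph.mem_incidenceFinset, SimpleGraph.mk'_mem_incidenceSet_iff]
      exact ⟨(G.mem_neighborFinset v u).1 hu, .inl rfl⟩
    · rw [SimpleGraph.mem_incidenceFinset] at he
      obtain ⟨u, rfl⟩ := Sym2.mem_iff_exists.1 he.2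
      exact ⟨u, (G.mem_neighborFinset v u).2 he.1, rfl⟩
  calc ∑ v, ∑ u ∈ G.neighborFinset v, r s(v, u)
      = ∑ v, ∑ e ∈ G.incidenceFinset v, r e := sum_congr rfl fun v _ => hvertex v
    _ = ∑ e ∈ G.edgeFinset, ∑ _v ∈ e.toFinset, r e :=
        sum_comm' fun v e => by simp [SimpleGraph.incidenceFinset_eq_filter, and_comm]
    _ = ∑ e ∈ G.edgeFinset, 2 * r e := by
        refine sum_congr rfl fun e he => ?_
        rw [sum_const, Sym2.card_toFinset_of_not_isDiag e
          (G.not_isDiag_of_mem_edgeSet (SimpleGraph.mem_edgeFinset.1 he)), nsmul_eq_mul,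
          Nat.cast_ofNat]
    _ = 2 * ∑ e ∈ G.edgeFinset, r e := (mul_sum _ _ _).symm

variable {G} {D : Type*} [Fintype D] {c : Sym2 W → D} {y : W → ℝ} {z : D → ℝ} {r : Sym2 W → ℝ}

lemma degree_mul_one_sub_le (hc : ProperColoring G c) (hz : ∀ d, 0 ≤ z d) {v : W}
    (hcover : ∀ u, G.Adj v u → 1 ≤ y v + y u + z (c s(v, u)) + r s(v, u)) :
    G.degree v * (1 - y v) ≤ ∑ u ∈ G.neighborFinset v, y u + ∑ d, z d +
      ∑ u ∈ G.neighborFinset v, r s(v, u) := by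
  classical
  have hcolours : ∑ u ∈ G.neighborFinset v, z (c s(v, u)) ≤ ∑ d, z d := by
    have hinj : Set.InjOn (fun u => c s(v, u)) (G.neighborFinset v) := by
      intro u hu u' hu' h
      rw [mem_coe, SimpleGraph.mem_neighborFinset] at hu hu'
      exact of_not_not fun hne => hc v u u' hu hu' hne h
    rw [← sum_image (f := z) hinj]
    exact sum_le_univ_sum_of_nonneg hz
  have hedges := card_nsmul_le_sum (G.neighborFinset v)
    (fun u => y u + z (c s(v, u)) + r s(v, u)) (1 - y v) fun u hu => by
      linarith [hcover u ((G.mem_neighborFinset v u).1 hu)]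
  rw [nsmul_eq_mul, SimpleGraph.card_neighborFinset_eq_degree, sum_add_distrib,
    sum_add_distrib] at hedges
  linarith

/-- The neighbours of a vertex `v` of small weight and the colours at `v` carry weight about
`deg v * (1 - y v)`, while the non-neighbours carry about `(n - deg v) * y v`. -/
lemma le_sum_add_sum_of_isMin (hc : ProperColoring G c) (hy : ∀ v, 0 ≤ y v) (hz : ∀ d, 0 ≤ z d)
    {B : Finset W} {κ : ℝ} (hB : #B ≤ κ * Fintype.card W) {v : W}
    (hmin : ∀ u ∉ B, y v ≤ y u) (hdeg : (Fintype.card W : ℝ) / 2 ≤ G.degree v)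
    (hcover : ∀ u, G.Adj v u → 1 ≤ y v + y u + z (c s(v, u)) + r s(v, u))
    (hv : ∑ u ∈ G.neighborFinset v, r s(v, u) ≤ κ * Fintype.card W) :
    (1 - 3 * κ) * (Fintype.card W / 2) ≤ ∑ u, y u + ∑ d, z d := by
  classical
  have hB0 : (0 : ℝ) ≤ #B := Nat.cast_nonneg _
  rcases le_total (y v) (1 / 2) with hhalf | hhalf
  · have hnear := degree_mul_one_sub_le hc hz hcover
    have hfar := card_sub_card_mul_le_sum (N := (G.neighborFinset v)ᶜ) hy (hy v) hmin
    have hsum := sum_add_sum_compl (G.neighborFinset v) y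
    have hcompl : (#(G.neighborFinset v)ᶜ : ℝ) = Fintype.card W - G.degree v := by
      rw [card_compl, Nat.cast_sub (card_le_univ _), SimpleGraph.card_neighborFinset_eq_degree]
    rw [hcompl] at hfar
    nlinarith [mul_nonneg (sub_nonneg.2 hdeg) (sub_nonneg.2 hhalf), mul_nonneg hB0 (hy v),
      mul_nonneg hB0 (sub_nonneg.2 hhalf)]
  · have hall := card_sub_card_mul_le_sum (N := univ) hy (by norm_num) fun u hu =>
      hhalf.trans (hmin u hu)
    rw [card_univ] at hall
    linarith [sum_nonneg fun d (_ : d ∈ univ) => hz d]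

/-- By Markov's inequality few vertices have large total deficiency `r`; consider a
lightest one among the others. -/
theorem le_sum_add_sum_of_almost_cover (hc : ProperColoring G c)
    (hdeg : ∀ v, (Fintype.card W : ℝ) / 2 ≤ G.degree v)
    (hy : ∀ v, 0 ≤ y v) (hz : ∀ d, 0 ≤ z d) (hr : ∀ e, 0 ≤ r e)
    (hcover : ∀ v u, G.Adj v u → 1 ≤ y v + y u + z (c s(v, u)) + r s(v, u)) {κ : ℝ} (hκ : 0 < κ)
    (hdeficiency : ∑ e ∈ G.edgeFinset, r e ≤ κ ^ 2 * Fintype.card W ^ 2 / 2) :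
    (1 - 3 * κ) * (Fintype.card W / 2) ≤ ∑ v, y v + ∑ d, z d := by
  classical
  have hweight : 0 ≤ ∑ v, y v + ∑ d, z d :=
    add_nonneg (sum_nonneg fun v _ => hy v) (sum_nonneg fun d _ => hz d)
  rcases isEmpty_or_nonempty W with hW | hW
  · simpa using hweight
  set n : ℝ := (Fintype.card W : ℝ)
  have hn : 0 < n := Nat.cast_pos.2 Fintype.card_pos
  set total : W → ℝ := fun v => ∑ u ∈ G.neighborFinset v, r s(v, u)
  set B : Finset W := {v | κ * n < total v}
  have hB : (#B : ℝ) ≤ κ * n := by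
    have hmarkov : #B * (κ * n) ≤ ∑ v, total v :=
      card_filter_lt_mul_le_sum (fun v => sum_nonneg fun u _ => hr _) (κ * n)
    rw [sum_sum_neighborFinset_eq_two_mul_sum_edgeFinset] at hmarkov
    exact le_of_mul_le_mul_right (by linarith) (mul_pos hκ hn)
  rcases (Bᶜ).eq_empty_or_nonempty with hempty | hne
  · have hcard : (#B : ℝ) = n := by rw [(compl_eq_empty_iff B).1 hempty, card_univ]
    nlinarith
  · obtain ⟨v, hvB, hmin⟩ := exists_min_image Bᶜ y hne
    refine le_sum_add_sum_of_isMin hc hy hz hB (fun u hu => hmin u (mem_compl.2 hu)) (hdeg v)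
      (hcover v) ?_
    simpa [B] using hvB

end VertexColourCover

section RainbowHypergraph

open Finset

variable {W D : Type*} [DecidableEq W]

/-- The hyperedge of an edge `e` of a coloured graph: its endvertices together with its colour. -/
def colouredEdge (c : Sym2 W → D) (e : Sym2 W) : Finset (W ⊕ D) := e.toFinset.disjSum {c e}

lemma inl_mem_colouredEdge {c : Sym2 W → D} {e : Sym2 W} {v : W} :
    .inl v ∈ colouredEdge c e ↔ v ∈ e := by
  simp [colouredEdge]

lemma inr_mem_colouredEdge {c : Sym2 W → D} {e : Sym2 W} {d : D} :
    .inr d ∈ colouredEdge c e ↔ d = c e := by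
  simp [colouredEdge]

lemma colouredEdge_injective (c : Sym2 W → D) : Function.Injective (colouredEdge c) :=
  fun e f h => Sym2.ext fun v => by rw [← inl_mem_colouredEdge (c := c), h, inl_mem_colouredEdge]

lemma sum_colouredEdge (c : Sym2 W → D) (w : W ⊕ D → ℝ) {v u : W} (h : v ≠ u) :
    ∑ x ∈ colouredEdge c s(v, u), w x = w (.inl v) + w (.inl u) + w (.inr (c s(v, u))) := by
  rw [colouredEdge, sum_disjSum, Sym2.toFinset_mk_eq, sum_pair h, sum_singleton]

variable [DecidableEq D] (G : SimpleGraph W) [Fintype G.edgeSet] (c : Sym2 W → D)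

/-- The hypergraph on vertices and colours whose matchings are the rainbow matchings of the
coloured graph. -/
def rainbowHypergraph : Finset (Finset (W ⊕ D)) := G.edgeFinset.image (colouredEdge c)

lemma card_rainbowHypergraph : #(rainbowHypergraph G c) = #G.edgeFinset :=
  card_image_of_injective _ (colouredEdge_injective c)

lemma sum_rainbowHypergraph (φ : Finset (W ⊕ D) → ℝ) :
    ∑ e ∈ rainbowHypergraph G c, φ e = ∑ e ∈ G.edgeFinset, φ (colouredEdge c e) :=
  sum_image (colouredEdge_injective c).injOn

lemma hasRainbowMatching_matchingNumber :
    HasRainbowMatching G c (matchingNumber (rainbowHypergraph G c)) := by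
  obtain ⟨M, hM, hdisj, hcard⟩ := exists_card_eq_matchingNumber (rainbowHypergraph G c)
  obtain ⟨M, hMG, rfl⟩ := subset_image_iff.1 hM
  have hedge (e : Sym2 W) (he : e ∈ M) (f : Sym2 W) (hf : f ∈ M) (hef : e ≠ f) :
      Disjoint (colouredEdge c e) (colouredEdge c f) :=
    hdisj (mem_image_of_mem _ he) (mem_image_of_mem _ hf) ((colouredEdge_injective c).ne hef)
  refine ⟨M, ?_, fun e he => SimpleGraph.mem_edgeFinset.1 (hMG he),
    fun e he f hf hef v hve hvf => ?_, fun e he f hf hef hcol => ?_⟩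
  · rw [← hcard, card_image_of_injective _ (colouredEdge_injective c)]
  · exact disjoint_left.1 (hedge e he f hf hef) (inl_mem_colouredEdge.2 hve)
      (inl_mem_colouredEdge.2 hvf)
  · exact disjoint_left.1 (hedge e he f hf hef) (inr_mem_colouredEdge.2 rfl)
      (inr_mem_colouredEdge.2 hcol)

variable {G c}

lemma card_eq_three_of_mem_rainbowHypergraph {e : Finset (W ⊕ D)}
    (he : e ∈ rainbowHypergraph G c) : #e = 3 := by
  obtain ⟨e, heG, rfl⟩ := mem_image.1 he
  rw [colouredEdge, card_disjSum, card_singleton, Sym2.card_toFinset_of_not_isDiag e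
    (G.not_isDiag_of_mem_edgeSet (SimpleGraph.mem_edgeFinset.1 heG))]

lemma ProperColoring.isLinear_rainbowHypergraph (hc : ProperColoring G c) :
    IsLinear (rainbowHypergraph G c) := by
  intro e' he f' hf hef
  obtain ⟨e, heG, rfl⟩ := mem_image.1 he
  obtain ⟨f, hfG, rfl⟩ := mem_image.1 hf
  have hne : e ≠ f := fun h => hef (h ▸ rfl)
  rw [SimpleGraph.mem_edgeFinset] at heG hfG
  have hcolour {v : W} (hve : v ∈ e) (hvf : v ∈ f) : c e ≠ c f := by
    obtain ⟨u, rfl⟩ := Sym2.mem_iff_exists.1 hve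
    obtain ⟨u', rfl⟩ := Sym2.mem_iff_exists.1 hvf
    exact hc v u u' heG hfG fun h => hne (h ▸ rfl)
  refine card_le_one.2 fun a ha b hb => ?_
  rw [mem_inter] at ha hb
  rcases a with v | d <;> rcases b with u | d' <;>
    simp only [inl_mem_colouredEdge, inr_mem_colouredEdge] at ha hb
  · exact of_not_not fun hvu =>
      hne (Sym2.eq_of_ne_mem (fun h => hvu (congrArg _ h)) ha.1 hb.1 ha.2 hb.2)
  · exact absurd (hb.1.symm.trans hb.2) (hcolour ha.1 ha.2)
  · exact absurd (ha.1.symm.trans ha.2) (hcolour hb.1 hb.2)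
  · rw [ha.1, hb.1]

end RainbowHypergraph

section MinDegree

open Finset

/-- The square of the left side is at most `12 * n ^ 3 / ε ^ 2`, that of the right side is
`ε ^ 4 * n ^ 4 / (4 * 6 ^ 4)`, and `62208 = 48 * 6 ^ 4`. -/
lemma sqrt_deficiency_le {ε n m s : ℝ} (hε : 0 < ε) (hn : 62208 / ε ^ 6 ≤ n)
    (hm : m ≤ n ^ 2 / 2) (hs0 : 0 ≤ s) (hs : s ≤ n / 2) :
    √(3 * m * s / (ε / 4) ^ 2) ≤ (ε / 6) ^ 2 * n ^ 2 / 2 := by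
  have hn0 : 0 ≤ n := le_trans (by positivity) hn
  rw [div_le_iff₀ (by positivity)] at hn
  refine Real.sqrt_le_iff.2 ⟨by positivity, ?_⟩
  rw [div_le_iff₀ (by positivity)]
  calc 3 * m * s ≤ 3 * (n ^ 2 / 2) * (n / 2) := by gcongr
    _ = 62208 * (n ^ 3 / 82944) := by ring
    _ ≤ n * ε ^ 6 * (n ^ 3 / 82944) := by gcongr
    _ = ((ε / 6) ^ 2 * n ^ 2 / 2) ^ 2 * (ε / 4) ^ 2 := by ring

variable {W D : Type*} [Fintype W]

lemma one_sub_mul_le_matchingNumber_rainbowHypergraph [DecidableEq W] [DecidableEq D] [Finite D]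
    {G : SimpleGraph W} [DecidableRel G.Adj] {c : Sym2 W → D} {ε : ℝ} (hε : 0 < ε)
    (hcard : 62208 / ε ^ 6 ≤ Fintype.card W) (hc : ProperColoring G c)
    (hdeg : ∀ v, (Fintype.card W : ℝ) / 2 ≤ G.degree v) :
    (1 - ε) * Fintype.card W / 2 ≤ matchingNumber (rainbowHypergraph G c) := by
  have := Fintype.ofFinite D
  set n : ℝ := (Fintype.card W : ℝ)
  have hn : 0 ≤ n := Nat.cast_nonneg _
  rcases le_total 1 ε with hε1 | hε1
  · exact (div_nonpos_of_nonpos_of_nonneg (mul_nonpos_of_nonpos_of_nonneg (by linarith) hn)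
      zero_le_two).trans (Nat.cast_nonneg _)
  obtain ⟨w, hw, hweight, hdeficiency⟩ := exists_almost_fractional_cover (r := 2) (δ := ε / 4)
    hc.isLinear_rainbowHypergraph (fun e => card_eq_three_of_mem_rainbowHypergraph)
    ⟨by linarith, by linarith⟩
  suffices hcover : (1 - 3 * (ε / 6)) * (n / 2) ≤ ∑ x, w x by
    nlinarith [mul_nonneg (sq_nonneg ε) hn]
  rcases le_total (∑ x, w x) (n / 2) with hsmall | hlarge
  · have hedges : (#G.edgeFinset : ℝ) ≤ n ^ 2 / 2 := by
      have hchoose : (#G.edgeFinset : ℝ) ≤ (Fintype.card W).choose 2 :=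
        Nat.cast_le.2 G.card_edgeFinset_le_card_choose_two
      exact hchoose.trans ((Nat.choose_le_pow_div 2 _).trans_eq (by norm_num [n]))
    have htotal : ∑ e ∈ G.edgeFinset, max 0 (1 - ∑ x ∈ colouredEdge c e, w x) ≤
        (ε / 6) ^ 2 * n ^ 2 / 2 := by
      rw [sum_rainbowHypergraph, card_rainbowHypergraph] at hdeficiency
      refine hdeficiency.trans ?_
      norm_num only [Nat.cast_ofNat]
      exact sqrt_deficiency_le hε hcard hedges (sum_nonneg fun x _ => hw x) hsmall
    rw [Fintype.sum_sum_type]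
    refine le_sum_add_sum_of_almost_cover hc hdeg (fun v => hw (.inl v)) (fun d => hw (.inr d))
      (fun e => le_max_left _ _) (fun v u hvu => ?_) (by linarith) htotal
    rw [sum_colouredEdge c w hvu.ne]
    linarith [le_max_right 0 (1 - (w (.inl v) + w (.inl u) + w (.inr (c s(v, u)))))]
  · nlinarith [mul_nonneg hε.le hn]

theorem rainbow_matching_of_min_degree_general {ε : ℝ} (hε : 0 < ε)
    (hcard : 62208 / ε ^ 6 ≤ Fintype.card W) {G : SimpleGraph W} {c : Sym2 W → D}
    (hc : ProperColoring G c)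
    (hdeg : ∀ v, (Fintype.card W : ℝ) / 2 ≤ (G.neighborSet v).ncard) :
    ∃ k : ℕ, (1 - ε) * Fintype.card W / 2 ≤ k ∧ HasRainbowMatching G c k := by
  classical
  set c' : Sym2 W → Set.range c := Set.rangeFactorization c
  have hc' : ProperColoring G c' := fun v u u' hu hu' hne h =>
    hc v u u' hu hu' hne (congrArg Subtype.val h)
  have hdegree (v : W) : (Fintype.card W : ℝ) / 2 ≤ G.degree v := by
    rw [← SimpleGraph.card_neighborSet_eq_degree, ← Set.toFinset_card,
      ← Set.ncard_eq_toFinset_card']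
    exact hdeg v
  obtain ⟨M, hM, hedges, hdisj, hrainbow⟩ := hasRainbowMatching_matchingNumber G c'
  exact ⟨_, one_sub_mul_le_matchingNumber_rainbowHypergraph hε hcard hc' hdegree, M, hM, hedges,
    hdisj, fun e he f hf hef h => hrainbow e he f hf hef (Subtype.ext h)⟩

end MinDegree

theorem rainbow_matching_of_min_degree (ε : ℝ) (hε : 0 < ε) :
    ∃ n₀ : ℕ, ∀ n : ℕ, n₀ ≤ n →
      ∀ (W : Type) [Fintype W], ∀ (D : Type) (G : SimpleGraph W) (c : Sym2 W → D),
        Fintype.card W = n → ProperColoring G c →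
        (∀ v : W, (n : ℝ) / 2 ≤ ((G.neighborSet v).ncard : ℝ)) →
        ∃ k : ℕ, (1 - ε) * (n : ℝ) / 2 ≤ (k : ℝ) ∧ HasRainbowMatching G c k := by
  refine ⟨⌈62208 / ε ^ 6⌉₊, fun n hn W _ D G c hcard hc hdeg => ?_⟩
  subst hcard
  exact rainbow_matching_of_min_degree_general hε (Nat.ceil_le.1 hn) hc hdeg

end Paper
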